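/- arXiv:2310.17886 — 2 statements merged into one kernel-verified Lean document; each statement's English description precedes it below -/
import Mathlib

section
/- For every real ε > 0 there exists a constant C(ε) > 0 such that for every integer n ≥ 2 and every connected n-vertex graph G, there exists a +k additive emulator H of G with at most C(ε)·n edges, where k = ⌈C(ε) · n^{1/(3+√5) + ε}⌉. -/
open SimpleGraph

/-- The weighted distance in an emulator `H` with edge weights `w`:
the minimum total weight of a walk from `s` to `t` (`⊤` if none exists). -/
noncomputable def emulatorDist {V : Type*} (H : SimpleGraph V) (w : Sym2 V → ℕ)
    (s t : V) : ℕ∞ :=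
  ⨅ p : H.Walk s t, ((p.edges.map w).sum : ℕ∞)

/-- `H` (with positive integer edge weights `w`) is a `+k` additive emulator of `G`:
for all vertices `s, t`, `dist_G(s,t) ≤ dist_H(s,t) ≤ dist_G(s,t) + k`. -/
def IsAdditiveEmulator {V : Type*} (G H : SimpleGraph V) (w : Sym2 V → ℕ)
    (k : ℕ) : Prop :=
  (∀ e ∈ H.edgeSet, 0 < w e) ∧
  ∀ s t : V, (G.dist s t : ℕ∞) ≤ emulatorDist H w s t ∧
    emulatorDist H w s t ≤ (G.dist s t : ℕ∞) + (k : ℕ∞)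


inductive Rch {V : Type} (G : SimpleGraph V) (E : Finset (V × V)) : V → V → ℕ → Prop
  | refl (v : V) (d : ℕ) : Rch G E v v d
  | step {u v w : V} {d d' : ℕ} : ((u, v) ∈ E ∨ (v, u) ∈ E) → Rch G E v w d →
      G.dist u v + d ≤ d' → Rch G E u w d'

namespace Rch
variable {V : Type} {G : SimpleGraph V} {E E' : Finset (V × V)}

theorem mono_d {u v : V} {d d' : ℕ} (h : Rch G E u v d) (hd : d ≤ d') : Rch G E u v d' := by
  cases h with
  | refl => exact Rch.refl _ _
  | step a b c => exact Rch.step a b (c.trans hd)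

theorem mono_E {u v : V} {d : ℕ} (h : Rch G E u v d) (hE : E ⊆ E') : Rch G E' u v d := by
  induction h with
  | refl => exact Rch.refl _ _
  | step a b c ih => exact Rch.step (a.imp (fun x => hE x) (fun x => hE x)) ih c

theorem trans {u v w : V} {d e : ℕ} (h : Rch G E u v d) (h' : Rch G E v w e) :
    Rch G E u w (d + e) := by
  induction h with
  | refl => exact h'.mono_d (by omega)
  | step a b c ih => exact Rch.step a (ih h') (by omega)

theorem edge {u v : V} (h : (u, v) ∈ E ∨ (v, u) ∈ E) : Rch G E u v (G.dist u v) :=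
  Rch.step h (Rch.refl v 0) (by omega)

theorem symm {u v : V} {d : ℕ} (h : Rch G E u v d) : Rch G E v u d := by
  induction h with
  | refl => exact Rch.refl _ _
  | step a b c ih =>
    refine (ih.trans (Rch.edge a.symm)).mono_d ?_
    rw [SimpleGraph.dist_comm]; omega

end Rch

/-- geodesic -/
def Geo {V : Type} (G : SimpleGraph V) (f : ℕ → V) (L : ℕ) : Prop :=
  ∀ i j, i ≤ j → j ≤ L → G.dist (f i) (f j) = j - i

theorem exists_geo {V : Type} {G : SimpleGraph V} (hG : G.Connected) (s t : V) :
    ∃ f : ℕ → V, f 0 = s ∧ f (G.dist s t) = t ∧ Geo G f (G.dist s t) := by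
  obtain ⟨p, hp⟩ := hG.exists_walk_length_eq_dist s t
  have key : ∀ i k, i + k ≤ p.length → G.dist (p.getVert i) (p.getVert (i + k)) ≤ k := by
    intro i k
    induction k with
    | zero => intro _; simp
    | succ k ih =>
      intro h
      have h1 := ih (by omega)
      have h2 : G.Adj (p.getVert (i + k)) (p.getVert (i + k + 1)) :=
        p.adj_getVert_succ (by omega)
      have h3 := hG.dist_triangle (u := p.getVert i) (v := p.getVert (i + k))
        (w := p.getVert (i + k + 1))
      rw [SimpleGraph.dist_eq_one_iff_adj.mpr h2] at h3
      rw [← add_assoc]; omega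
  refine ⟨p.getVert, p.getVert_zero, ?_, ?_⟩
  · rw [← hp]; exact p.getVert_length
  · intro i j hij hj
    have a := key i (j - i) (by omega)
    have b := key 0 i (by omega)
    have c := key j (p.length - j) (by omega)
    rw [show i + (j - i) = j by omega] at a
    rw [show 0 + i = i by omega, p.getVert_zero] at b
    rw [show j + (p.length - j) = p.length by omega, p.getVert_length] at c
    have h1 := hG.dist_triangle (u := s) (v := p.getVert i) (w := t)
    have h2 := hG.dist_triangle (u := p.getVert i) (v := p.getVert j) (w := t)
    omega

theorem Geo.adj {V : Type} {G : SimpleGraph V} {f : ℕ → V} {L i : ℕ} (h : Geo G f L)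
    (hi : i + 1 ≤ L) : G.Adj (f i) (f (i + 1)) := by
  have := h i (i + 1) (by omega) hi
  rw [← SimpleGraph.dist_eq_one_iff_adj]; omega

open Classical in
/-- set of regions visited -/
noncomputable def reg {V : Type} (cl : V → V) (f : ℕ → V) (i j : ℕ) : Finset V :=
  (Finset.Icc i j).image (fun k => cl (f k))

theorem reg_mono {V : Type} (cl : V → V) (f : ℕ → V) {i j i' j' : ℕ} (h : i' ≤ i) (h' : j ≤ j') :
    reg cl f i j ⊆ reg cl f i' j' := by
  classical
  exact Finset.image_subset_image (Finset.Icc_subset_Icc h h')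

theorem last_idx {V : Type} (cl : V → V) (f : ℕ → V) {i j : ℕ} (hij : i ≤ j) :
    ∃ w, i ≤ w ∧ w ≤ j ∧ cl (f w) = cl (f i) ∧ ∀ k, w < k → k ≤ j → cl (f k) ≠ cl (f i) := by
  classical
  let S := (Finset.Icc i j).filter (fun k => cl (f k) = cl (f i))
  have hS : S.Nonempty := ⟨i, by simp [S, hij]⟩
  have hm := S.max'_mem hS
  refine ⟨S.max' hS, ?_, ?_, ?_, ?_⟩
  · simp only [S, Finset.mem_filter, Finset.mem_Icc] at hm; exact hm.1.1
  · simp only [S, Finset.mem_filter, Finset.mem_Icc] at hm; exact hm.1.2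
  · simp only [S, Finset.mem_filter, Finset.mem_Icc] at hm; exact hm.2
  · intro k hk hkj he
    have hi : i ≤ S.max' hS := by
      simp only [S, Finset.mem_filter, Finset.mem_Icc] at hm; exact hm.1.1
    have : k ∈ S := by simp only [S, Finset.mem_filter, Finset.mem_Icc]; exact ⟨⟨by omega, hkj⟩, he⟩
    have := S.le_max' k this
    omega

section chain
variable {V : Type} {G : SimpleGraph V} {E : Finset (V × V)} {cl : V → V} {e : V → ℕ}
  {P : V → Prop} {M : ℕ}

theorem chainA
    (h1 : ∀ u v, cl u = cl v → Rch G E u v M)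
    (h2 : ∀ u v, G.Adj u v → cl u ≠ cl v → P u ∧ P v ∧ Rch G E u v (1 + e (cl u) + e (cl v)))
    (h3 : ∀ u v, cl u = cl v → P u → P v → Rch G E u v (G.dist u v + e (cl u)))
    {f : ℕ → V} {L : ℕ} (hf : Geo G f L) :
    ∀ m i j, j - i ≤ m → i ≤ j → j ≤ L → P (f i) → ∃ D, Rch G E (f i) (f j) D ∧
      D + e (cl (f i)) ≤ (j - i) + 3 * (∑ c ∈ reg cl f i j, e c) + M := by
  classical
  intro m
  induction m with
  | zero =>
    intro i j hm hij hj hP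
    have : i = j := by omega
    subst this
    refine ⟨0, Rch.refl _ _, ?_⟩
    simp [reg]; omega
  | succ m ih =>
    intro i j hm hij hj hP
    obtain ⟨w, hiw, hwj, hw, hlast⟩ := last_idx cl f hij
    have hmem : cl (f i) ∈ reg cl f i j := by
      simp only [reg, Finset.mem_image, Finset.mem_Icc]; exact ⟨i, ⟨le_rfl, hij⟩, rfl⟩
    rcases Nat.lt_or_ge w j with hlt | hge
    · have hadj := hf.adj (i := w) (by omega)
      have hne : cl (f w) ≠ cl (f (w + 1)) := by
        rw [hw]; exact (hlast (w + 1) (by omega) (by omega)).symm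
      obtain ⟨hPw, hPx, hR⟩ := h2 _ _ hadj hne
      obtain ⟨D, hD, hD2⟩ := ih (w + 1) j (by omega) (by omega) hj hPx
      have r1 := h3 _ _ hw.symm hP hPw
      rw [hf i w hiw (by omega)] at r1
      refine ⟨_, (r1.trans hR).trans hD, ?_⟩
      have hsub : insert (cl (f i)) (reg cl f (w + 1) j) ⊆ reg cl f i j :=
        Finset.insert_subset hmem (reg_mono _ _ (by omega) le_rfl)
      have hnot : cl (f i) ∉ reg cl f (w + 1) j := by
        simp only [reg, Finset.mem_image, Finset.mem_Icc, not_exists, not_and]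
        intro k hk; exact hlast k (by omega) (by omega)
      have hs := Finset.sum_le_sum_of_subset (f := e) hsub
      rw [Finset.sum_insert hnot] at hs
      rw [hw]
      omega
    · have : w = j := by omega
      subst this
      have hs := Finset.single_le_sum (f := e) (fun _ _ => Nat.zero_le _) hmem
      refine ⟨M, h1 _ _ hw.symm, ?_⟩
      omega

theorem chainB
    (h0 : ∀ u v, G.Adj u v → Rch G E u v M)
    (h1 : ∀ u v, cl u = cl v → Rch G E u v M)
    (h2 : ∀ u v, G.Adj u v → cl u ≠ cl v → P u ∧ P v ∧ Rch G E u v (1 + e (cl u) + e (cl v)))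
    (h3 : ∀ u v, cl u = cl v → P u → P v → Rch G E u v (G.dist u v + e (cl u)))
    {f : ℕ → V} {L : ℕ} (hf : Geo G f L) (i j : ℕ) (hij : i ≤ j) (hj : j ≤ L) :
    Rch G E (f i) (f j) ((j - i) + 3 * (∑ c ∈ reg cl f i j, e c) + 3 * M) := by
  classical
  obtain ⟨w, hiw, hwj, hw, hlast⟩ := last_idx cl f hij
  rcases Nat.lt_or_ge w j with hlt | hge
  · have hadj := hf.adj (i := w) (by omega)
    have hne : cl (f w) ≠ cl (f (w + 1)) := by
      rw [hw]; exact (hlast (w + 1) (by omega) (by omega)).symm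
    obtain ⟨hPw, hPx, -⟩ := h2 _ _ hadj hne
    obtain ⟨D, hD, hD2⟩ := chainA h1 h2 h3 hf _ (w + 1) j le_rfl (by omega) hj hPx
    refine (((h1 _ _ hw.symm).trans (h0 _ _ hadj)).trans hD).mono_d ?_
    have hs := Finset.sum_le_sum_of_subset (f := e)
      (reg_mono cl f (i := w + 1) (i' := i) (j := j) (by omega) le_rfl)
    omega
  · have : w = j := by omega
    subst this
    exact (h1 _ _ hw.symm).mono_d (by omega)

/-- path buying -/
theorem buying [Fintype V] (hG : G.Connected) (R : ℕ)
    (h0 : ∀ u v, G.Adj u v → Rch G E u v M)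
    (h1 : ∀ u v, cl u = cl v → Rch G E u v M)
    (h2 : ∀ u v, G.Adj u v → cl u ≠ cl v → P u ∧ P v ∧ Rch G E u v (1 + e (cl u) + e (cl v)))
    (h3 : ∀ u v, cl u = cl v → P u → P v → Rch G E u v (G.dist u v + e (cl u)))
    (h4 : ∀ u, Rch G E u (cl u) M ∧ G.dist u (cl u) ≤ M) :
    ∃ E' : Finset (V × V), E'.card * (R + 1) ^ 2 ≤ E.card * (R + 1) ^ 2 + (∑ c, e c) ^ 2 ∧
      ∀ s t, Rch G E' s t (G.dist s t + (12 * R + 26 * M)) := by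
  classical
  let k1 := 3 * R + 4 * M
  let Sat : Finset (V × V) → Finset (V × V) := fun E' =>
    Finset.univ.filter (fun p => Rch G E' p.1 p.2 (G.dist p.1 p.2 + 2 * k1 + 4 * M))
  let Φ : Finset (V × V) → ℕ := fun E' => ∑ p ∈ Sat E', e p.1 * e p.2
  let S : Finset (Finset (V × V)) := Finset.univ.filter (fun E' => E ⊆ E' ∧
    E'.card * (R + 1) ^ 2 ≤ E.card * (R + 1) ^ 2 + Φ E')
  have hS : S.Nonempty := ⟨E, by simp [S]⟩
  obtain ⟨F, hFS, hmax⟩ := S.exists_max_image Finset.card hS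
  have hF : E ⊆ F ∧ F.card * (R + 1) ^ 2 ≤ E.card * (R + 1) ^ 2 + Φ F := by
    simpa [S] using hFS
  obtain ⟨hEF, hFc⟩ := hF
  refine ⟨F, ?_, ?_⟩
  · refine hFc.trans (Nat.add_le_add_left ?_ _)
    calc Φ F ≤ ∑ p : V × V, e p.1 * e p.2 :=
          Finset.sum_le_sum_of_subset (Finset.subset_univ _)
      _ = (∑ c, e c) ^ 2 := by
          rw [sq, Finset.sum_mul_sum, ← Finset.univ_product_univ, Finset.sum_product]
  · intro s t
    by_contra hbad
    obtain ⟨f, hf0, hfL, hf⟩ := exists_geo hG s t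
    generalize hL : G.dist s t = L at *
    have cB := fun i j hij hj => (chainB h0 h1 h2 h3 hf i j hij hj).mono_E hEF
    let g : ℕ → ℕ := fun i => ∑ c ∈ reg cl f 0 i, e c
    let h : ℕ → ℕ := fun j => ∑ c ∈ reg cl f j L, e c
    by_cases hgL : g L ≤ R
    · apply hbad
      have := cB 0 L (by omega) le_rfl
      rw [hf0, hfL] at this
      exact this.mono_d (by simp only [g] at hgL; omega)
    have hex : ∃ i, R < g i := ⟨L, by omega⟩
    obtain ⟨x, hx, hxmin⟩ : ∃ x, R < g x ∧ ∀ i, i < x → g i ≤ R :=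
      ⟨Nat.find hex, Nat.find_spec hex, fun i hi => by
        have := Nat.find_min hex hi; omega⟩
    have hxL : x ≤ L := by
      by_contra hc; have := hxmin L (by omega); omega
    obtain ⟨y, hyL, hy, hymax⟩ : ∃ y, y ≤ L ∧ R < h y ∧ ∀ j, y < j → h j ≤ R := by
      have hgh : g L = h 0 := rfl
      let T := (Finset.range (L + 1)).filter (fun j => R < h j)
      have hT : T.Nonempty := ⟨0, by simp [T]; omega⟩
      have hm := T.max'_mem hT
      simp only [T, Finset.mem_filter, Finset.mem_range] at hm
      refine ⟨_, by omega, hm.2, ?_⟩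
      intro j hj
      by_contra hc
      rcases Nat.lt_or_ge L j with hlt | hge
      · apply hc
        simp only [h, reg]
        rw [Finset.Icc_eq_empty (by omega)]; simp
      · have : j ∈ T := by simp only [T, Finset.mem_filter, Finset.mem_range]; omega
        have := T.le_max' j this
        change j ≤ _ at this
        exact absurd hj (not_lt.mpr this)
    have pre : ∀ i, i ≤ x → Rch G F (f i) (f x) ((x - i) + k1) := by
      intro i hi
      rcases Nat.lt_or_ge i x with hlt | hge
      · have a := cB i (x - 1) (by omega) (by omega)
        have hadj := hf.adj (i := x - 1) (by omega)
        rw [show x - 1 + 1 = x by omega] at hadj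
        refine (a.trans ((h0 _ _ hadj).mono_E hEF)).mono_d ?_
        have b := hxmin (x - 1) (by omega)
        have hs := Finset.sum_le_sum_of_subset (f := e)
          (reg_mono cl f (i := i) (i' := 0) (j := x - 1) (by omega) le_rfl)
        simp only [g] at b
        simp only [k1]; omega
      · have : i = x := by omega
        subst this; exact Rch.refl _ _
    have suf : ∀ j, y ≤ j → j ≤ L → Rch G F (f y) (f j) ((j - y) + k1) := by
      intro j hj hjL
      rcases Nat.lt_or_ge y j with hlt | hge
      · have a := cB (y + 1) j (by omega) (by omega)
        have hadj := hf.adj (i := y) (by omega)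
        refine (((h0 _ _ hadj).mono_E hEF).trans a).mono_d ?_
        have b := hymax (y + 1) (by omega)
        have hs := Finset.sum_le_sum_of_subset (f := e)
          (reg_mono cl f (i := y + 1) (i' := y + 1) (j := j) le_rfl hjL)
        simp only [h] at b
        simp only [k1]; omega
      · have : j = y := by omega
        subst this; exact Rch.refl _ _
    rcases Nat.lt_or_ge y x with hyx | hxy
    · apply hbad
      have a := pre 0 (by omega)
      have b := cB x L hxL le_rfl
      have c := hymax x hyx
      rw [hf0] at a
      rw [hfL] at b
      refine (a.trans b).mono_d ?_
      simp only [h] at c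
      simp only [k1]; omega
    -- main case
    let F' := insert (f x, f y) F
    have hFF' : F ⊆ F' := Finset.subset_insert _ _
    have hedge : Rch G F' (f x) (f y) (y - x) := by
      have := Rch.edge (G := G) (E := F') (u := f x) (v := f y) (Or.inl (Finset.mem_insert_self _ _))
      rwa [hf x y hxy hyL] at this
    let A := reg cl f 0 x
    let B := reg cl f y L
    have hA : ∀ c ∈ A, ∃ i, i ≤ x ∧ cl (f i) = c := by
      intro c hc
      simp only [A, reg, Finset.mem_image, Finset.mem_Icc] at hc
      obtain ⟨i, hi, hc⟩ := hc
      exact ⟨i, hi.2, hc⟩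
    have hB : ∀ c ∈ B, ∃ j, y ≤ j ∧ j ≤ L ∧ cl (f j) = c := by
      intro c hc
      simp only [B, reg, Finset.mem_image, Finset.mem_Icc] at hc
      obtain ⟨i, hi, hc⟩ := hc
      exact ⟨i, hi.1, hi.2, hc⟩
    have hnew : ∀ c ∈ A, ∀ c' ∈ B, Rch G F' c c' (G.dist c c' + 2 * k1 + 4 * M) := by
      intro c hc c' hc'
      obtain ⟨i, hi, rfl⟩ := hA c hc
      obtain ⟨j, hj, hjL, rfl⟩ := hB c' hc'
      have r1 := ((h4 (f i)).1.symm.mono_E hEF).mono_E hFF'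
      have r2 := (pre i hi).mono_E hFF'
      have r3 := (suf j hj hjL).mono_E hFF'
      have r4 := ((h4 (f j)).1.mono_E hEF).mono_E hFF'
      refine ((((r1.trans r2).trans hedge).trans r3).trans r4).mono_d ?_
      have d1 := hG.dist_triangle (u := f i) (v := cl (f i)) (w := f j)
      have d2 := hG.dist_triangle (u := cl (f i)) (v := cl (f j)) (w := f j)
      have d3 := (h4 (f i)).2
      have d4 := (h4 (f j)).2
      rw [SimpleGraph.dist_comm] at d4
      have d5 := hf i j (by omega) hjL
      omega
    have hold : ∀ c ∈ A, ∀ c' ∈ B, ¬ Rch G F c c' (G.dist c c' + 2 * k1 + 4 * M) := by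
      intro c hc c' hc' hr
      obtain ⟨i, hi, rfl⟩ := hA c hc
      obtain ⟨j, hj, hjL, rfl⟩ := hB c' hc'
      apply hbad
      have hgi : ∀ i, i ≤ x → Rch G F s (f i) (i + k1 + M) := by
        intro i hi
        rcases Nat.lt_or_ge i x with hlt | hge
        · have a := cB 0 i (by omega) (by omega)
          have b := hxmin i hlt
          rw [hf0] at a
          simp only [g] at b
          exact a.mono_d (by simp only [k1]; omega)
        · have : i = x := by omega
          subst this
          have a := pre 0 (by omega)
          rw [hf0] at a
          exact a.mono_d (by omega)
      have hgj : Rch G F (f j) t ((L - j) + k1 + M) := by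
        rcases Nat.lt_or_ge y j with hlt | hge
        · have a := cB j L (by omega) (by omega)
          have b := hymax j hlt
          rw [hfL] at a
          simp only [h] at b
          exact a.mono_d (by simp only [k1]; omega)
        · have : j = y := by omega
          subst this
          have a := suf L hyL le_rfl
          rw [hfL] at a
          exact a.mono_d (by omega)
      have r1 := (h4 (f i)).1.mono_E hEF
      have r4 := (h4 (f j)).1.symm.mono_E hEF
      refine (((((hgi i hi).trans r1).trans hr).trans r4).trans hgj).mono_d ?_
      have d1 := hG.dist_triangle (u := cl (f i)) (v := f i) (w := cl (f j))
      have d2 := hG.dist_triangle (u := f i) (v := f j) (w := cl (f j))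
      have d3 := (h4 (f i)).2
      have d4 := (h4 (f j)).2
      rw [SimpleGraph.dist_comm] at d3
      have d5 := hf i j (by omega) hjL
      simp only [k1]
      omega
    have hxyF : (f x, f y) ∉ F := by
      intro hin
      have hF'F : F' = F := Finset.insert_eq_of_mem hin
      have mx : cl (f x) ∈ A := by
        simp only [A, reg, Finset.mem_image, Finset.mem_Icc]; exact ⟨x, ⟨by omega, le_rfl⟩, rfl⟩
      have my : cl (f y) ∈ B := by
        simp only [B, reg, Finset.mem_image, Finset.mem_Icc]; exact ⟨y, ⟨le_rfl, hyL⟩, rfl⟩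
      have := hnew _ mx _ my
      rw [hF'F] at this
      exact hold _ mx _ my this
    have hΦ : Φ F + (R + 1) ^ 2 ≤ Φ F' := by
      have hdisj : Disjoint (Sat F) (A ×ˢ B) := by
        rw [Finset.disjoint_right]
        intro p hp hs
        rw [Finset.mem_product] at hp
        simp only [Sat, Finset.mem_filter] at hs
        exact hold _ hp.1 _ hp.2 hs.2
      have hsub : Sat F ∪ A ×ˢ B ⊆ Sat F' := by
        intro p hp
        simp only [Sat, Finset.mem_filter, Finset.mem_univ, true_and]
        rcases Finset.mem_union.mp hp with hp | hp
        · simp only [Sat, Finset.mem_filter] at hp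
          exact hp.2.mono_E hFF'
        · rw [Finset.mem_product] at hp
          exact hnew _ hp.1 _ hp.2
      have hs := Finset.sum_le_sum_of_subset (f := fun p : V × V => e p.1 * e p.2) hsub
      rw [Finset.sum_union hdisj, Finset.sum_product, ← Finset.sum_mul_sum] at hs
      have : (R + 1) ^ 2 ≤ (∑ c ∈ A, e c) * (∑ c ∈ B, e c) := by
        rw [sq]; exact Nat.mul_le_mul hx hy
      simp only [Φ]
      omega
    have hcard : F'.card = F.card + 1 := Finset.card_insert_of_notMem hxyF
    have hF'S : F' ∈ S := by
      simp only [S, Finset.mem_filter, Finset.mem_univ, true_and]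
      refine ⟨hEF.trans hFF', ?_⟩
      rw [hcard, add_mul]; omega
    have := hmax F' hF'S
    omega

end chain

section clust
variable {V : Type} [Fintype V] (G : SimpleGraph V)

open Classical in
noncomputable def bl (v : V) (d : ℕ) : Finset V := Finset.univ.filter (fun u => G.dist v u ≤ d)

theorem mem_bl {v u : V} {d : ℕ} : u ∈ bl G v d ↔ G.dist v u ≤ d := by simp [bl]

open Classical in
noncomputable def lay (v : V) (l : ℕ) : Finset V :=
  Finset.univ.filter (fun u => G.dist v u = l ∨ G.dist v u = l + 1)

theorem mem_lay {v u : V} {l : ℕ} : u ∈ lay G v l ↔ G.dist v u = l ∨ G.dist v u = l + 1 := by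
  simp [lay]

theorem bl_pos (v : V) (d : ℕ) : 0 < (bl G v d).card :=
  Finset.card_pos.mpr ⟨v, by simp [mem_bl]⟩

theorem exists_radius (N r : ℕ) (hN : 1 ≤ N) (v : V) : ∃ ρ, r ≤ ρ ∧
    ρ ^ N ≤ Fintype.card V * r ^ N ∧ (bl G v (11 * ρ)).card ≤ 11 ^ N * (bl G v ρ).card := by
  classical
  have key : ∀ j, (∀ i < j, 11 ^ N * (bl G v (11 ^ i * r)).card < (bl G v (11 ^ (i + 1) * r)).card) →
      (11 ^ N) ^ j ≤ (bl G v (11 ^ j * r)).card := by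
    intro j
    induction j with
    | zero => intro _; simpa using bl_pos G v _
    | succ j ih =>
      intro h
      have h1 := ih (fun i hi => h i (by omega))
      have h2 := h j (by omega)
      rw [pow_succ, mul_comm]
      exact (Nat.mul_le_mul_left _ h1).trans h2.le
  have hex : ∃ j, (bl G v (11 ^ (j + 1) * r)).card ≤ 11 ^ N * (bl G v (11 ^ j * r)).card := by
    by_contra hc
    push Not at hc
    have h1 := key (Fintype.card V) (fun i _ => hc i)
    have h2 : (bl G v (11 ^ (Fintype.card V) * r)).card ≤ Fintype.card V := Finset.card_le_univ _
    have h3 : Fintype.card V < (11 ^ N) ^ (Fintype.card V) :=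
      Nat.lt_pow_self (Nat.one_lt_pow (by omega) (by norm_num))
    omega
  have hs := Nat.find_spec hex
  have hm := fun i hi => Nat.find_min hex (m := i) hi
  generalize Nat.find hex = j at hs hm
  refine ⟨11 ^ j * r, Nat.le_mul_of_pos_left _ (by positivity), ?_, ?_⟩
  · have h1 := key j (fun i hi => not_le.mp (hm i hi))
    have h2 : (bl G v (11 ^ j * r)).card ≤ Fintype.card V := Finset.card_le_univ _
    rw [mul_pow, ← pow_mul, mul_comm j N, pow_mul]
    exact Nat.mul_le_mul_right _ (h1.trans h2)
  · rw [← mul_assoc, ← pow_succ']; exact hs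

theorem exists_layer (v : V) (ρ : ℕ) (hρ : 1 ≤ ρ) : ∃ l, 3 * ρ ≤ l ∧ l + 1 ≤ 5 * ρ ∧
    (lay G v l).card * ρ ≤ (bl G v (5 * ρ)).card := by
  classical
  by_contra hc
  push Not at hc
  have h1 : ∀ i ∈ Finset.range ρ, (bl G v (5 * ρ)).card + 1 ≤ (lay G v (3 * ρ + 2 * i)).card * ρ := by
    intro i hi
    rw [Finset.mem_range] at hi
    exact hc _ (by omega) (by omega)
  have h2 := Finset.sum_le_sum h1
  rw [← Finset.sum_mul, ← Finset.card_biUnion, Finset.sum_const, Finset.card_range, smul_eq_mul,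
    mul_comm] at h2
  · have h3 := Nat.le_of_mul_le_mul_right h2 hρ
    have h4 : (Finset.range ρ).biUnion (fun i => lay G v (3 * ρ + 2 * i)) ⊆ bl G v (5 * ρ) := by
      intro u hu
      simp only [Finset.mem_biUnion, Finset.mem_range, mem_lay] at hu
      obtain ⟨i, hi, hu⟩ := hu
      rw [mem_bl]; omega
    have := Finset.card_le_card h4
    omega
  · intro i hi j hj hij
    rw [Function.onFun, Finset.disjoint_left]
    intro u hu hu'
    rw [mem_lay] at hu hu'
    omega

variable {G}

theorem exists_vitali (hG : G.Connected) (ρ : V → ℕ) : ∃ T : Finset V,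
    (∀ c ∈ T, ∀ c' ∈ T, c ≠ c' → Disjoint (bl G c (ρ c)) (bl G c' (ρ c'))) ∧
    ∀ v, ∃ c ∈ T, G.dist c v ≤ 3 * ρ c := by
  classical
  obtain ⟨R, hR⟩ : ∃ R : ℕ, ∀ v, ρ v ≤ R :=
    ⟨Finset.univ.sup ρ, fun v => Finset.le_sup (Finset.mem_univ v)⟩
  obtain ⟨u, -, hu, hc⟩ := Vitali.exists_disjoint_subfamily_covering_enlargement
    (fun v => (bl G v (ρ v) : Set V)) Set.univ (fun v => (ρ v : ℝ)) 2 (by norm_num)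
    (fun a _ => by positivity) R (fun a _ => by exact_mod_cast hR a)
    (fun a _ => ⟨a, by simp [mem_bl]⟩)
  refine ⟨Finset.univ.filter (· ∈ u), ?_, ?_⟩
  · intro c hcu c' hcu' hne
    simp only [Finset.mem_filter, Finset.mem_univ, true_and] at hcu hcu'
    have := hu hcu hcu' hne
    exact Finset.disjoint_coe.mp this
  · intro v
    obtain ⟨c, hcu, ⟨x, hx1, hx2⟩, hle⟩ := hc v (Set.mem_univ v)
    refine ⟨c, by simpa using hcu, ?_⟩
    have hle' : ρ v ≤ 2 * ρ c := by exact_mod_cast hle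
    rw [Finset.mem_coe, mem_bl] at hx1 hx2
    have := hG.dist_triangle (u := c) (v := x) (w := v)
    rw [G.dist_comm (u := x)] at this
    omega

theorem induce_walk {f : ℕ → V} {L : ℕ} (hf : Geo G f L) (B : Set V)
    (hB : ∀ i, i ≤ L → f i ∈ B) (i : ℕ) (hi : i ≤ L) :
    ∃ p : (G.induce B).Walk ⟨f 0, hB 0 (by omega)⟩ ⟨f i, hB i hi⟩, p.length = i := by
  induction i with
  | zero => exact ⟨.nil, rfl⟩
  | succ i ih =>
    obtain ⟨p, hp⟩ := ih (by omega)
    have hadj : (G.induce B).Adj ⟨f i, hB i (by omega)⟩ ⟨f (i + 1), hB _ hi⟩ := by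
      rw [SimpleGraph.induce_adj]; exact hf.adj hi
    exact ⟨p.concat hadj, by simp [hp]⟩

theorem induce_between (hG : G.Connected) (B : Set V) (u v : V)
    (hB : ∀ x, G.dist u x + G.dist x v = G.dist u v → x ∈ B) (hu : u ∈ B) (hv : v ∈ B) :
    (G.induce B).Reachable ⟨u, hu⟩ ⟨v, hv⟩ ∧ (G.induce B).dist ⟨u, hu⟩ ⟨v, hv⟩ ≤ G.dist u v := by
  obtain ⟨f, h0, hL, hf⟩ := exists_geo hG u v
  generalize hLL : G.dist u v = L at *
  subst h0 hL
  have hB' : ∀ i, i ≤ L → f i ∈ B := by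
    intro i hi
    apply hB
    rw [hf 0 i (by omega) hi, hf i L hi le_rfl]; omega
  obtain ⟨p, hp⟩ := induce_walk hf B hB' L le_rfl
  exact ⟨⟨p⟩, (SimpleGraph.dist_le p).trans hp.le⟩

theorem Rch.map_induce (B : Set V) [DecidableEq V] (hc : (G.induce B).Connected)
    {E : Finset (B × B)} {u v : B} {d : ℕ} (h : Rch (G.induce B) E u v d) :
    Rch G (E.image (Prod.map Subtype.val Subtype.val)) u v d := by
  induction h with
  | refl => exact Rch.refl _ _
  | @step u v w d d' a b c ih =>
    refine Rch.step (v := (v : V)) ?_ ih ?_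
    · rcases a with a | a
      · left; exact Finset.mem_image.mpr ⟨_, a, rfl⟩
      · right; exact Finset.mem_image.mpr ⟨_, a, rfl⟩
    · obtain ⟨p, hp⟩ := hc.exists_walk_length_eq_dist u v
      have := SimpleGraph.dist_le (p.map (SimpleGraph.Embedding.induce B).toHom)
      rw [SimpleGraph.Walk.length_map, hp] at this
      change G.dist (u : V) (v : V) ≤ _ at this
      omega

end clust

def PP (a : ℝ) : Prop := ∃ C : ℝ, 0 ≤ C ∧ ∀ (V : Type) [Fintype V] (G : SimpleGraph V),
  G.Connected → ∃ E : Finset (V × V), (E.card : ℝ) ≤ C * Fintype.card V ∧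
    ∃ k : ℕ, (k : ℝ) ≤ C * (Fintype.card V : ℝ) ^ a ∧ ∀ s t, Rch G E s t (G.dist s t + k)

theorem ball_emulator {a C : ℝ} (hP : ∀ (V : Type) [Fintype V] (G : SimpleGraph V),
  G.Connected → ∃ E : Finset (V × V), (E.card : ℝ) ≤ C * Fintype.card V ∧
    ∃ k : ℕ, (k : ℝ) ≤ C * (Fintype.card V : ℝ) ^ a ∧ ∀ s t, Rch G E s t (G.dist s t + k))
    {V : Type} [Fintype V] {G : SimpleGraph V} (hG : G.Connected) (c : V) (D : ℕ) :
    ∃ E : Finset (V × V), (E.card : ℝ) ≤ C * (bl G c D).card ∧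
    ∃ k : ℕ, (k : ℝ) ≤ C * ((bl G c D).card : ℝ) ^ a ∧
      ∀ s t, 2 * G.dist c s ≤ D → 2 * G.dist c t ≤ D → Rch G E s t (G.dist s t + k) := by
  classical
  let B : Set V := ↑(bl G c D)
  have hmem : ∀ x, x ∈ B ↔ G.dist c x ≤ D := fun x => by simp only [B, Finset.mem_coe, mem_bl]
  have hcB : c ∈ B := by rw [hmem]; simp
  have hconn : (G.induce B).Connected := by
    have : Nonempty B := ⟨⟨c, hcB⟩⟩
    have hr : ∀ x : B, (G.induce B).Reachable ⟨c, hcB⟩ x := by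
      rintro ⟨x, hx⟩
      refine (induce_between hG B c x ?_ hcB hx).1
      intro y hy
      rw [hmem] at hx ⊢
      omega
    exact ⟨fun x y => (hr x).symm.trans (hr y)⟩
  have hcard : Fintype.card B = (bl G c D).card := by simp [B]
  obtain ⟨E, hE, k, hk, hR⟩ := hP B (G.induce B) hconn
  rw [hcard] at hE hk
  refine ⟨E.image (Prod.map Subtype.val Subtype.val), ?_, k, hk, ?_⟩
  · refine le_trans ?_ hE
    exact_mod_cast Finset.card_image_le
  · intro s t hs ht
    have hsB : s ∈ B := by rw [hmem]; omega
    have htB : t ∈ B := by rw [hmem]; omega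
    have h1 := (hR ⟨s, hsB⟩ ⟨t, htB⟩).map_induce B hconn
    refine h1.mono_d ?_
    have := (induce_between hG B s t ?_ hsB htB).2
    · omega
    · intro x hx
      rw [hmem]
      have a1 := hG.dist_triangle (u := c) (v := s) (w := x)
      have a2 := hG.dist_triangle (u := c) (v := t) (w := x)
      have a3 := hG.dist_triangle (u := s) (v := c) (w := t)
      rw [G.dist_comm (u := s) (v := c)] at a3
      rw [G.dist_comm (u := t) (v := x)] at a2
      omega

theorem assemble {a C : ℝ} (hC : 0 ≤ C) (hP : ∀ (V : Type) [Fintype V] (G : SimpleGraph V),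
  G.Connected → ∃ E : Finset (V × V), (E.card : ℝ) ≤ C * Fintype.card V ∧
    ∃ k : ℕ, (k : ℝ) ≤ C * (Fintype.card V : ℝ) ^ a ∧ ∀ s t, Rch G E s t (G.dist s t + k))
    {V : Type} [Fintype V] {G : SimpleGraph V} (hG : G.Connected)
    (ha : a ≤ 1) (N r R : ℕ) (hN : 1 ≤ N) (hr : 1 ≤ r)
    (hR : ∀ ρ : ℕ, ρ ^ N ≤ Fintype.card V * r ^ N → ρ ≤ R) :
    ∃ (E : Finset (V × V)) (b S : ℕ),
      E.card * (R + 1) ^ 2 ≤ b * (R + 1) ^ 2 + S ^ 2 ∧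
      (b : ℝ) ≤ (1 + ((11 : ℝ) ^ N) ^ 2 + C) * (11 ^ N * Fintype.card V) ∧
      (S : ℝ) ≤ C * ((r : ℝ) ^ 2) ^ (a - 1) * (11 ^ N * Fintype.card V) ∧
      ∀ s t, Rch G E s t (G.dist s t + (12 * R + 26 * (10 * R))) := by
  classical
  choose ρ hρr hρN hρK using exists_radius G N r hN
  have hρR : ∀ v, ρ v ≤ R := fun v => hR _ (hρN v)
  choose l hl1 hl2 hl3 using fun v => exists_layer G v (ρ v) (hr.trans (hρr v))
  obtain ⟨T, hTd, hTc⟩ := exists_vitali hG ρ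
  obtain ⟨key, hkinj, hkρ⟩ : ∃ key : V → ℕ, Function.Injective key ∧
      ∀ c c', key c ≤ key c' → ρ c ≤ ρ c' := by
    let n := Fintype.card V
    let eq := Fintype.equivFin V
    have hlt : ∀ v, (eq v : ℕ) < n := fun v => (eq v).2
    refine ⟨fun v => n * ρ v + eq v, ?_, ?_⟩
    · intro u v huv
      simp only at huv
      have h1 := congrArg (· % n) huv
      simp only [Nat.mul_add_mod, Nat.mod_eq_of_lt (hlt _)] at h1
      exact eq.injective (Fin.ext h1)
    · intro u v huv
      by_contra hc
      have h1 : n * (ρ v + 1) ≤ n * ρ u := Nat.mul_le_mul_left _ (by omega)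
      have := hlt v
      rw [mul_add] at h1
      simp only at huv
      omega
  have hcl : ∀ v, ∃ c, c ∈ T ∧ G.dist c v ≤ l c ∧
      ∀ c' ∈ T, G.dist c' v ≤ l c' → key c ≤ key c' := by
    intro v
    obtain ⟨c0, hc0, hd0⟩ := hTc v
    obtain ⟨c, hc, hmin⟩ := (T.filter (fun c => G.dist c v ≤ l c)).exists_min_image key
      ⟨c0, by simp only [Finset.mem_filter]; exact ⟨hc0, hd0.trans (hl1 c0)⟩⟩
    simp only [Finset.mem_filter] at hc hmin
    exact ⟨c, hc.1, hc.2, fun c' h h' => hmin c' ⟨h, h'⟩⟩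
  choose cl hclT hcld hclmin using hcl
  let m : V → ℕ := fun c => (bl G c (11 * ρ c)).card
  choose Em hEm kk hkk hEmR using fun c => ball_emulator hP hG c (11 * ρ c)
  let e : V → ℕ := fun c => if c ∈ T ∧ ¬ m c ≤ r ^ 2 then kk c else 0
  let Q : V → Finset V := fun c => Finset.univ.filter (fun v => G.dist c v ≤ l c + 1 ∧
    ∃ c' ∈ T, key c' ≤ key c ∧ v ∈ lay G c' (l c'))
  let E1 : V → Finset (V × V) := fun c => (bl G c (11 * ρ c)).image (fun v => (c, v))
  let E2 : V → Finset (V × V) := fun c => if m c ≤ r ^ 2 then Q c ×ˢ Q c else Em c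
  let E := T.biUnion (fun c => E1 c ∪ E2 c)
  -- counting
  have hblsum : ∀ (T' : Finset V) (X : Finset V), T' ⊆ T → (∀ c ∈ T', bl G c (ρ c) ⊆ X) →
      ∑ c ∈ T', m c ≤ 11 ^ N * X.card := by
    intro T' X hT' hX
    calc ∑ c ∈ T', m c ≤ ∑ c ∈ T', 11 ^ N * (bl G c (ρ c)).card :=
          Finset.sum_le_sum (fun c _ => hρK c)
      _ = 11 ^ N * (T'.biUnion (fun c => bl G c (ρ c))).card := by
          rw [← Finset.mul_sum, Finset.card_biUnion]
          intro c hc c' hc' hne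
          exact hTd c (hT' hc) c' (hT' hc') hne
      _ ≤ _ := Nat.mul_le_mul_left _ (Finset.card_le_card (Finset.biUnion_subset.mpr hX))
  have hmsum : ∑ c ∈ T, m c ≤ 11 ^ N * Fintype.card V :=
    hblsum T Finset.univ subset_rfl (fun _ _ => Finset.subset_univ _)
  have hQ : ∀ c, (Q c).card * r ≤ 11 ^ N * m c := by
    intro c
    let T' := T.filter (fun c' => key c' ≤ key c ∧ G.dist c c' ≤ 10 * ρ c)
    have hsub : Q c ⊆ T'.biUnion (fun c' => lay G c' (l c')) := by
      intro v hv
      simp only [Q, Finset.mem_filter, Finset.mem_univ, true_and] at hv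
      obtain ⟨hd, c', hc', hk, hlv⟩ := hv
      refine Finset.mem_biUnion.mpr ⟨c', ?_, hlv⟩
      simp only [T', Finset.mem_filter]
      refine ⟨hc', hk, ?_⟩
      rw [mem_lay, G.dist_comm] at hlv
      have h1 := hG.dist_triangle (u := c) (v := v) (w := c')
      have h2 := hkρ _ _ hk
      have h3 := hl2 c
      have h4 := hl2 c'
      omega
    calc (Q c).card * r ≤ (∑ c' ∈ T', (lay G c' (l c')).card) * r :=
          Nat.mul_le_mul_right _ ((Finset.card_le_card hsub).trans Finset.card_biUnion_le)
      _ = ∑ c' ∈ T', (lay G c' (l c')).card * r := Finset.sum_mul _ _ _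
      _ ≤ ∑ c' ∈ T', m c' := by
          refine Finset.sum_le_sum (fun c' _ => ?_)
          refine (Nat.mul_le_mul_left _ (hρr c')).trans ((hl3 c').trans ?_)
          refine Finset.card_le_card ?_
          intro x hx
          rw [mem_bl] at hx ⊢; omega
      _ ≤ 11 ^ N * m c := by
          refine hblsum T' _ (Finset.filter_subset _ _) ?_
          intro c' hc' x hx
          simp only [T', Finset.mem_filter] at hc'
          rw [mem_bl] at hx ⊢
          have h1 := hG.dist_triangle (u := c) (v := c') (w := x)
          have h2 := hkρ _ _ hc'.2.1
          omega
  have hE2 : ∀ c, ((E2 c).card : ℝ) ≤ (((11 : ℝ) ^ N) ^ 2 + C) * m c := by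
    intro c
    by_cases hs : m c ≤ r ^ 2
    · have h1 : (Q c).card * (Q c).card ≤ (11 ^ N) ^ 2 * m c := by
        have hr2 : 0 < r ^ 2 := by positivity
        refine Nat.le_of_mul_le_mul_right ?_ hr2
        calc (Q c).card * (Q c).card * r ^ 2 = ((Q c).card * r) ^ 2 := by ring
          _ ≤ (11 ^ N * m c) ^ 2 := Nat.pow_le_pow_left (hQ c) 2
          _ = (11 ^ N) ^ 2 * m c * m c := by ring
          _ ≤ _ := Nat.mul_le_mul_left _ hs
      have h2 : (E2 c).card = (Q c).card * (Q c).card := by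
        simp only [E2, if_pos hs, Finset.card_product]
      rw [h2, add_mul]
      have h3 : (((Q c).card * (Q c).card : ℕ) : ℝ) ≤ ((11 : ℝ) ^ N) ^ 2 * m c := by
        exact_mod_cast h1
      have : 0 ≤ C * m c := by positivity
      linarith
    · have h2 : (E2 c).card = (Em c).card := by
        simp only [E2, if_neg hs]
      rw [h2, add_mul]
      have h3 := hEm c
      have : 0 ≤ ((11 : ℝ) ^ N) ^ 2 * m c := by positivity
      simp only [m] at *
      linarith
  have hEcard : (E.card : ℝ) ≤ (1 + ((11 : ℝ) ^ N) ^ 2 + C) * (11 ^ N * Fintype.card V) := by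
    have h1 : (E.card : ℝ) ≤ ∑ c ∈ T, (1 + ((11 : ℝ) ^ N) ^ 2 + C) * m c := by
      have h2 : E.card ≤ ∑ c ∈ T, (E1 c ∪ E2 c).card := Finset.card_biUnion_le
      have h3 : (E.card : ℝ) ≤ ∑ c ∈ T, ((E1 c ∪ E2 c).card : ℝ) := by exact_mod_cast h2
      refine h3.trans (Finset.sum_le_sum (fun c _ => ?_))
      have h4 : (E1 c ∪ E2 c).card ≤ m c + (E2 c).card :=
        (Finset.card_union_le _ _).trans (Nat.add_le_add_right Finset.card_image_le _)
      have h5 : ((E1 c ∪ E2 c).card : ℝ) ≤ m c + (E2 c).card := by exact_mod_cast h4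
      have h6 := hE2 c
      linarith
    refine h1.trans ?_
    rw [← Finset.mul_sum]
    refine mul_le_mul_of_nonneg_left ?_ (by positivity)
    exact_mod_cast hmsum
  have hesum : ((∑ c, e c : ℕ) : ℝ) ≤ C * ((r : ℝ) ^ 2) ^ (a - 1) * (11 ^ N * Fintype.card V) := by
    have h1 : ∑ c, e c = ∑ c ∈ T, e c := by
      symm
      refine Finset.sum_subset (Finset.subset_univ _) ?_
      intro c _ hc
      simp [e, hc]
    rw [h1]
    push_cast
    have h2 : ∀ c ∈ T, (e c : ℝ) ≤ C * ((r : ℝ) ^ 2) ^ (a - 1) * m c := by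
      intro c hc
      by_cases hs : m c ≤ r ^ 2
      · simp only [e, hs, not_true, and_false, if_false, Nat.cast_zero]
        positivity
      · have he : e c = kk c := by simp only [e, hs, hc, not_false_eq_true, and_self, if_true]
        rw [he]
        refine (hkk c).trans ?_
        change C * (m c : ℝ) ^ a ≤ _
        rw [mul_assoc]
        refine mul_le_mul_of_nonneg_left ?_ hC
        have hr0 : (0 : ℝ) < (r : ℝ) ^ 2 := by positivity
        have hmr : (r : ℝ) ^ 2 ≤ m c := by
          have := (not_le.mp hs).le
          exact_mod_cast this
        have hm0 : (0 : ℝ) < m c := by linarith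
        have h3 : (m c : ℝ) ^ a = (m c : ℝ) ^ (a - 1) * m c := by
          rw [Real.rpow_sub_one hm0.ne']; field_simp
        rw [h3]
        exact mul_le_mul_of_nonneg_right
          (Real.rpow_le_rpow_of_nonpos hr0 hmr (by linarith)) hm0.le
    refine (Finset.sum_le_sum h2).trans ?_
    rw [← Finset.mul_sum]
    refine mul_le_mul_of_nonneg_left ?_ (by positivity)
    exact_mod_cast hmsum
  -- reachability
  have hstar : ∀ c ∈ T, ∀ v, G.dist c v ≤ 5 * ρ c → Rch G E c v (5 * R) := by
    intro c hc v hv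
    have : (c, v) ∈ E := by
      refine Finset.mem_biUnion.mpr ⟨c, hc, Finset.mem_union_left _ ?_⟩
      refine Finset.mem_image.mpr ⟨v, ?_, rfl⟩
      rw [mem_bl]; omega
    refine (Rch.edge (Or.inl this)).mono_d ?_
    have := hρR c
    omega
  have hstar2 : ∀ c ∈ T, ∀ u v, G.dist c u ≤ 5 * ρ c → G.dist c v ≤ 5 * ρ c →
      Rch G E u v (10 * R) := by
    intro c hc u v hu hv
    exact ((hstar c hc u hu).symm.trans (hstar c hc v hv)).mono_d (by omega)
  have hbig : ∀ c ∈ T, ¬ m c ≤ r ^ 2 → ∀ u v, G.dist c u ≤ 5 * ρ c → G.dist c v ≤ 5 * ρ c →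
      Rch G E u v (G.dist u v + e c) := by
    intro c hc hs u v hu hv
    have he : e c = kk c := by simp only [e, hs, hc, not_false_eq_true, and_self, if_true]
    rw [he]
    refine (hEmR c u v (by omega) (by omega)).mono_E ?_
    intro p hp
    refine Finset.mem_biUnion.mpr ⟨c, hc, Finset.mem_union_right _ ?_⟩
    simp only [E2, if_neg hs]; exact hp
  have hsmall : ∀ c ∈ T, m c ≤ r ^ 2 → ∀ u ∈ Q c, ∀ v ∈ Q c, Rch G E u v (G.dist u v) := by
    intro c hc hs u hu v hv
    refine Rch.edge (Or.inl ?_)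
    refine Finset.mem_biUnion.mpr ⟨c, hc, Finset.mem_union_right _ ?_⟩
    simp only [E2, if_pos hs, Finset.mem_product]; exact ⟨hu, hv⟩
  have hQd : ∀ c v, v ∈ Q c → G.dist c v ≤ 5 * ρ c := by
    intro c v hv
    simp only [Q, Finset.mem_filter, Finset.mem_univ, true_and] at hv
    exact hv.1.trans (hl2 c)
  have hboth : ∀ c ∈ T, ∀ u ∈ Q c, ∀ v ∈ Q c, Rch G E u v (G.dist u v + e c) := by
    intro c hc u hu v hv
    by_cases hs : m c ≤ r ^ 2
    · exact (hsmall c hc hs u hu v hv).mono_d (by omega)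
    · exact hbig c hc hs u v (hQd _ _ hu) (hQd _ _ hv)
  have hd5 : ∀ v, G.dist (cl v) v ≤ 5 * ρ (cl v) := by
    intro v
    have h1 := hcld v
    have h2 := hl2 (cl v)
    omega
  have hadjd : ∀ c u v, G.Adj u v → G.dist c v ≤ G.dist c u + 1 := by
    intro c u v h
    have := hG.dist_triangle (u := c) (v := u) (w := v)
    rwa [SimpleGraph.dist_eq_one_iff_adj.mpr h] at this
  have htrans : ∀ u v, G.Adj u v → key (cl u) < key (cl v) →
      u ∈ Q (cl u) ∧ v ∈ Q (cl v) ∧ v ∈ Q (cl u) := by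
    intro u v hadj hk
    have h1 : l (cl u) < G.dist (cl u) v := by
      by_contra hc
      have := hclmin v (cl u) (hclT u) (by omega)
      omega
    have h2 := hadjd (cl u) u v hadj
    have h3 := hcld u
    have h4 := hcld v
    have lu : u ∈ lay G (cl u) (l (cl u)) := by rw [mem_lay]; omega
    have lv : v ∈ lay G (cl u) (l (cl u)) := by rw [mem_lay]; omega
    simp only [Q, Finset.mem_filter, Finset.mem_univ, true_and]
    exact ⟨⟨by omega, cl u, hclT u, le_rfl, lu⟩, ⟨by omega, cl u, hclT u, hk.le, lv⟩,
      ⟨by omega, cl u, hclT u, le_rfl, lv⟩⟩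
  obtain ⟨E', hE', hfin⟩ := buying (G := G) (E := E) (cl := cl) (e := e)
    (P := fun v => v ∈ Q (cl v)) (M := 10 * R) hG R
    (by
      intro u v hadj
      refine hstar2 (cl u) (hclT u) u v (hd5 u) ?_
      have h1 := hadjd (cl u) u v hadj
      have h2 := hcld u
      have h3 := hl2 (cl u)
      omega)
    (by
      intro u v huv
      refine hstar2 (cl u) (hclT u) u v (hd5 u) ?_
      rw [huv]; exact hd5 v)
    (by
      intro u v hadj hne
      have hd1 := SimpleGraph.dist_eq_one_iff_adj.mpr hadj
      rcases lt_trichotomy (key (cl u)) (key (cl v)) with hk | hk | hk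
      · obtain ⟨h1, h2, h3⟩ := htrans u v hadj hk
        exact ⟨h1, h2, (hboth _ (hclT u) _ h1 _ h3).mono_d (by omega)⟩
      · exact absurd (hkinj hk) hne
      · obtain ⟨h1, h2, h3⟩ := htrans v u hadj.symm hk
        exact ⟨h2, h1, (hboth _ (hclT v) _ h3 _ h1).mono_d (by omega)⟩)
    (by
      intro u v huv hu hv
      refine hboth _ (hclT u) _ hu _ ?_
      rw [huv]; exact hv)
    (by
      intro u
      refine ⟨((hstar _ (hclT u) u (hd5 u)).symm).mono_d (by omega), ?_⟩
      have := hd5 u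
      rw [G.dist_comm] at this
      have h2 := hρR (cl u)
      omega)
  exact ⟨E', E.card, ∑ c, e c, hE', hEcard, hesum, hfin⟩

theorem PP_one : PP 1 := by
  refine ⟨2, by norm_num, ?_⟩
  intro V _ G hG
  classical
  obtain ⟨c⟩ := hG.nonempty
  have hd : ∀ v, G.dist c v ≤ Fintype.card V := by
    intro v
    obtain ⟨f, h0, hL, hf⟩ := exists_geo hG c v
    have : Set.InjOn f (Finset.range (G.dist c v) : Set ℕ) := by
      intro i hi j hj hij
      simp only [Finset.coe_range, Set.mem_Iio] at hi hj
      rcases le_total i j with h | h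
      · have := hf i j h (by omega)
        rw [hij] at this; simp at this; omega
      · have := hf j i h (by omega)
        rw [hij] at this; simp at this; omega
    have h2 := Finset.card_image_of_injOn this
    rw [Finset.card_range] at h2
    rw [← h2]
    exact Finset.card_le_univ _
  refine ⟨Finset.univ.image (fun v => (c, v)), ?_, 2 * Fintype.card V, ?_, ?_⟩
  · have : (Finset.univ.image (fun v : V => (c, v))).card ≤ Fintype.card V := Finset.card_image_le
    have h2 : ((Finset.univ.image (fun v : V => (c, v))).card : ℝ) ≤ Fintype.card V := by
      exact_mod_cast this
    have : (0 : ℝ) ≤ Fintype.card V := by positivity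
    linarith
  · rw [Real.rpow_one]; push_cast; exact le_rfl
  · intro s t
    have h : ∀ v, Rch G (Finset.univ.image (fun v => (c, v))) c v (Fintype.card V) := fun v =>
      (Rch.edge (Or.inl (Finset.mem_image.mpr ⟨v, Finset.mem_univ _, rfl⟩))).mono_d (hd v)
    exact ((h s).symm.trans (h t)).mono_d (by omega)

theorem PP_step {a b : ℝ} (ha1 : a ≤ 1) (hb : 1 / (6 - 4 * a) < b) (h : PP a) : PP b := by
  obtain ⟨C, hC, hP⟩ := h
  set b0 := 1 / (6 - 4 * a) with hb0
  have h64 : 0 < 6 - 4 * a := by linarith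
  have hb0p : 0 < b0 := by positivity
  obtain ⟨N', hN'⟩ := exists_nat_gt (1 / (b - b0))
  set N := N' + 1 with hN
  have hNp : 1 ≤ N := by omega
  have hNpR : (0 : ℝ) < N := by positivity
  have hNb : 1 / (N : ℝ) ≤ b - b0 := by
    rw [div_le_iff₀ hNpR]
    have : 0 < b - b0 := by linarith
    rw [div_lt_iff₀ this] at hN'
    rw [hN]; push_cast
    nlinarith
  let K : ℝ := 11 ^ N
  have hKp : 0 ≤ K := by positivity
  let C1 : ℝ := (1 + K ^ 2 + C) * K + C ^ 2 * K ^ 2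
  have hC1 : 0 ≤ C1 := by positivity
  refine ⟨C1 + 816, by positivity, ?_⟩
  intro V _ G hG
  have hne := hG.nonempty
  set n := Fintype.card V with hn
  have hn1 : 1 ≤ n := Fintype.card_pos
  have hn1R : (1 : ℝ) ≤ n := by exact_mod_cast hn1
  have hn0R : (0 : ℝ) < n := by linarith
  let r := ⌈(n : ℝ) ^ b0⌉₊
  have hrn : (n : ℝ) ^ b0 ≤ r := Nat.le_ceil _
  have hnb1 : 1 ≤ (n : ℝ) ^ b0 := Real.one_le_rpow hn1R hb0p.le
  have hr1R : (1 : ℝ) ≤ r := hnb1.trans hrn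
  have hr1 : 1 ≤ r := by exact_mod_cast hr1R
  have hr2 : (r : ℝ) ≤ 2 * (n : ℝ) ^ b0 := by
    have := Nat.ceil_lt_add_one (a := (n : ℝ) ^ b0) (by positivity)
    change (r : ℝ) < _ at this
    linarith
  have hnb : 1 ≤ (n : ℝ) ^ b := Real.one_le_rpow hn1R (by linarith)
  let R := ⌈2 * (n : ℝ) ^ b⌉₊
  have hRn : 2 * (n : ℝ) ^ b ≤ R := Nat.le_ceil _
  have hR2 : (R : ℝ) ≤ 3 * (n : ℝ) ^ b := by
    have := Nat.ceil_lt_add_one (a := 2 * (n : ℝ) ^ b) (by positivity)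
    change (R : ℝ) < _ at this
    linarith
  have hnn : (n : ℝ) ^ b0 ≤ (n : ℝ) ^ b := Real.rpow_le_rpow_of_exponent_le hn1R hb.le
  have hrR : (r : ℝ) ≤ R := by linarith
  obtain ⟨E, bb, S, h1, h2, h3, h4⟩ := assemble (V := V) hC hP hG ha1 N r R hNp hr1 (by
    intro ρ hρ
    have hρ' : (ρ : ℝ) ^ N ≤ n * (r : ℝ) ^ N := by exact_mod_cast hρ
    have e1 : ((n : ℝ) ^ (1 / (N : ℝ))) ^ N = n := by
      rw [← Real.rpow_natCast, ← Real.rpow_mul hn0R.le, one_div, inv_mul_cancel₀ hNpR.ne',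
        Real.rpow_one]
    have e2 : (ρ : ℝ) ^ N ≤ ((n : ℝ) ^ (1 / (N : ℝ)) * r) ^ N := by
      rw [mul_pow, e1]; exact hρ'
    have e3 : (ρ : ℝ) ≤ (n : ℝ) ^ (1 / (N : ℝ)) * r :=
      le_of_pow_le_pow_left₀ (by omega) (by positivity) e2
    have e4 : (n : ℝ) ^ (1 / (N : ℝ)) ≤ (n : ℝ) ^ (b - b0) :=
      Real.rpow_le_rpow_of_exponent_le hn1R hNb
    have e5 : (ρ : ℝ) ≤ R := by
      calc (ρ : ℝ) ≤ (n : ℝ) ^ (b - b0) * (2 * (n : ℝ) ^ b0) :=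
            e3.trans (mul_le_mul e4 hr2 (by positivity) (by positivity))
        _ = 2 * (n : ℝ) ^ b := by
            rw [mul_left_comm, ← Real.rpow_add hn0R]; congr 2; ring
        _ ≤ R := hRn
    exact_mod_cast e5)
  have hnb' : (0 : ℝ) ≤ (n : ℝ) ^ b := by positivity
  refine ⟨E, ?_, 12 * R + 26 * (10 * R), ?_, h4⟩
  · have hr0 : (0 : ℝ) < r := by linarith
    have hS2 : (S : ℝ) ^ 2 ≤ C ^ 2 * K ^ 2 * n * (R + 1) ^ 2 := by
      have g1 : (S : ℝ) ^ 2 ≤ (C * ((r : ℝ) ^ 2) ^ (a - 1) * (K * n)) ^ 2 :=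
        pow_le_pow_left₀ (by positivity) h3 2
      have g2 : (((r : ℝ) ^ 2) ^ (a - 1)) ^ 2 * n ≤ (r : ℝ) ^ 2 := by
        have q1 : (n : ℝ) ≤ (r : ℝ) ^ (6 - 4 * a) := by
          calc (n : ℝ) = ((n : ℝ) ^ b0) ^ (6 - 4 * a) := by
                rw [← Real.rpow_mul hn0R.le, hb0, one_div, inv_mul_cancel₀ h64.ne', Real.rpow_one]
            _ ≤ _ := Real.rpow_le_rpow (by positivity) hrn h64.le
        have q2 : (((r : ℝ) ^ 2) ^ (a - 1)) ^ 2 = (r : ℝ) ^ (4 * a - 4) := by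
          rw [← Real.rpow_natCast, ← Real.rpow_natCast, ← Real.rpow_mul hr0.le,
            ← Real.rpow_mul hr0.le]
          congr 1; push_cast; ring
        rw [q2]
        calc (r : ℝ) ^ (4 * a - 4) * n ≤ (r : ℝ) ^ (4 * a - 4) * (r : ℝ) ^ (6 - 4 * a) :=
              mul_le_mul_of_nonneg_left q1 (by positivity)
          _ = (r : ℝ) ^ 2 := by
              rw [← Real.rpow_add hr0, ← Real.rpow_natCast]; congr 1; push_cast; ring
      have g3 : (r : ℝ) ^ 2 ≤ (R + 1) ^ 2 := by
        refine pow_le_pow_left₀ hr0.le ?_ 2; linarith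
      calc (S : ℝ) ^ 2 ≤ C ^ 2 * K ^ 2 * n * ((((r : ℝ) ^ 2) ^ (a - 1)) ^ 2 * n) := by
            refine g1.trans (le_of_eq ?_); ring
        _ ≤ _ := mul_le_mul_of_nonneg_left (g2.trans g3) (by positivity)
    have h1' : (E.card : ℝ) * (R + 1) ^ 2 ≤ bb * (R + 1) ^ 2 + (S : ℝ) ^ 2 := by exact_mod_cast h1
    have hRp : (0 : ℝ) < (R + 1) ^ 2 := by positivity
    have h5 : (E.card : ℝ) * (R + 1) ^ 2 ≤ (C1 * n) * (R + 1) ^ 2 := by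
      have g4 : (bb : ℝ) * (R + 1) ^ 2 ≤ ((1 + K ^ 2 + C) * (K * n)) * (R + 1) ^ 2 :=
        mul_le_mul_of_nonneg_right h2 hRp.le
      have : (C1 * n) * ((R : ℝ) + 1) ^ 2 = ((1 + K ^ 2 + C) * (K * n)) * (R + 1) ^ 2 +
          C ^ 2 * K ^ 2 * n * (R + 1) ^ 2 := by simp only [C1]; ring
      linarith
    have h6 := le_of_mul_le_mul_right h5 hRp
    nlinarith
  · push_cast
    nlinarith [mul_nonneg hC1 hnb']

theorem PP_mono {a b : ℝ} (hab : a ≤ b) (h : PP a) : PP b := by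
  obtain ⟨C, hC, hP⟩ := h
  refine ⟨C, hC, ?_⟩
  intro V _ G hG
  obtain ⟨E, h1, k, h2, h3⟩ := hP V G hG
  have hne := hG.nonempty
  have hn1 : (1 : ℝ) ≤ Fintype.card V := by exact_mod_cast Fintype.card_pos
  exact ⟨E, h1, k, h2.trans (mul_le_mul_of_nonneg_left
    (Real.rpow_le_rpow_of_exponent_le hn1 hab) hC), h3⟩

theorem PP_all (ε : ℝ) (hε : 0 < ε) : PP (1 / (3 + Real.sqrt 5) + ε) := by
  set q := Real.sqrt 5 with hq
  have hq2 : q ^ 2 = 5 := Real.sq_sqrt (by norm_num)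
  have hq0 : 0 ≤ q := Real.sqrt_nonneg _
  have hq1 : 2 < q := by nlinarith
  have hq3 : q < 3 := by nlinarith
  have hphi : 1 / (3 + q) = (3 - q) / 4 := by
    rw [div_eq_div_iff (by positivity) (by norm_num)]; nlinarith
  rw [hphi]
  let S : Set ℝ := {a | 0 ≤ a ∧ a ≤ 1 ∧ PP a}
  have hSne : S.Nonempty := ⟨1, by norm_num, le_rfl, PP_one⟩
  have hSb : BddBelow S := ⟨0, fun a ha => ha.1⟩
  set α := sInf S with hα
  have hα1 : α ≤ 1 := csInf_le hSb ⟨by norm_num, le_rfl, PP_one⟩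
  have hle : α ≤ (3 - q) / 4 := by
    by_contra hc
    push Not at hc
    have hα0 : 0 < α := by linarith
    have hneg : 4 * α ^ 2 - 6 * α + 1 < 0 := by
      nlinarith [mul_pos (sub_pos.mpr hc) (show 0 < (3 + q) / 4 - α by linarith)]
    have hlt : α < (6 - 1 / α) / 4 := by
      rw [lt_div_iff₀ (by norm_num)]
      have : 1 / α < 6 - 4 * α := by
        rw [div_lt_iff₀ hα0]; nlinarith
      linarith
    obtain ⟨a, ⟨ha0, ha1, hPa⟩, haα⟩ := exists_lt_of_csInf_lt hSne hlt
    have h64 : 0 < 6 - 4 * a := by linarith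
    have hfa : 1 / (6 - 4 * a) < α := by
      rw [div_lt_iff₀ h64]
      have h1 : 1 / α < 6 - 4 * a := by linarith
      rw [div_lt_iff₀ hα0] at h1
      linarith
    obtain ⟨b, hb1, hb2⟩ := exists_between hfa
    have hb0 : 0 ≤ b := (by positivity : (0 : ℝ) ≤ 1 / (6 - 4 * a)).trans hb1.le
    have : α ≤ b := csInf_le hSb ⟨hb0, by linarith, PP_step ha1 hb1 hPa⟩
    linarith
  obtain ⟨a, ⟨_, _, hPa⟩, ha⟩ := exists_lt_of_csInf_lt hSne (show sInf S < (3 - q) / 4 + ε by linarith)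
  exact PP_mono ha.le hPa

theorem Rch.walk {V : Type} {G H : SimpleGraph V} {E : Finset (V × V)} {w : Sym2 V → ℕ}
    (hH : ∀ u v, H.Adj u v ↔ u ≠ v ∧ ((u, v) ∈ E ∨ (v, u) ∈ E))
    (hw : ∀ u v, w s(u, v) = G.dist u v) {u v : V} {d : ℕ} (h : Rch G E u v d) :
    ∃ p : H.Walk u v, (p.edges.map w).sum ≤ d := by
  induction h with
  | refl => exact ⟨.nil, by simp⟩
  | @step u v x d d' a b c ih =>
    obtain ⟨p, hp⟩ := ih
    by_cases huv : u = v
    · subst huv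
      exact ⟨p, by omega⟩
    · refine ⟨.cons ((hH u v).mpr ⟨huv, a⟩) p, ?_⟩
      simp only [SimpleGraph.Walk.edges_cons, List.map_cons, List.sum_cons, hw]
      omega

theorem linear_size_emulator :
    ∀ ε : ℝ, 0 < ε → ∃ C : ℝ, 0 < C ∧
      ∀ n : ℕ, 2 ≤ n → ∀ G : SimpleGraph (Fin n), G.Connected →
        ∃ (H : SimpleGraph (Fin n)) (w : Sym2 (Fin n) → ℕ),
          IsAdditiveEmulator G H w ⌈C * (n : ℝ) ^ (1 / (3 + Real.sqrt 5) + ε)⌉₊ ∧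
          (H.edgeSet.ncard : ℝ) ≤ C * n := by
  intro ε hε
  obtain ⟨C, hC, hP⟩ := PP_all ε hε
  refine ⟨C + 1, by linarith, ?_⟩
  intro n hn G hG
  obtain ⟨E, hE, k, hk, hR⟩ := hP (Fin n) G hG
  rw [Fintype.card_fin] at hE hk
  let H : SimpleGraph (Fin n) := SimpleGraph.fromRel (fun u v => (u, v) ∈ E)
  let w : Sym2 (Fin n) → ℕ := Sym2.lift ⟨fun u v => G.dist u v, fun u v => G.dist_comm⟩
  have hw : ∀ u v, w s(u, v) = G.dist u v := fun u v => rfl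
  have hH : ∀ u v, H.Adj u v ↔ u ≠ v ∧ ((u, v) ∈ E ∨ (v, u) ∈ E) := fun u v => by
    simp [H, SimpleGraph.fromRel_adj]
  refine ⟨H, w, ⟨?_, ?_⟩, ?_⟩
  · intro e
    induction e using Sym2.ind with
    | _ u v =>
      intro he
      rw [SimpleGraph.mem_edgeSet] at he
      rw [hw]
      exact hG.pos_dist_of_ne he.ne
  · intro s t
    constructor
    · refine le_iInf (fun p => ?_)
      have : G.dist s t ≤ (p.edges.map w).sum := by
        induction p with
        | nil => simp
        | @cons u v x h p ih =>
          simp only [SimpleGraph.Walk.edges_cons, List.map_cons, List.sum_cons, hw]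
          have := hG.dist_triangle (u := u) (v := v) (w := x)
          omega
      exact_mod_cast this
    · obtain ⟨p, hp⟩ := (hR s t).walk hH hw
      refine (iInf_le _ p).trans ?_
      have hk' : k ≤ ⌈(C + 1) * (n : ℝ) ^ (1 / (3 + Real.sqrt 5) + ε)⌉₊ := by
        have : (k : ℝ) ≤ (C + 1) * (n : ℝ) ^ (1 / (3 + Real.sqrt 5) + ε) := by
          refine hk.trans (mul_le_mul_of_nonneg_right (by linarith) (by positivity))
        exact_mod_cast this.trans (Nat.le_ceil _)
      exact_mod_cast hp.trans (Nat.add_le_add_left hk' _)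
  · have hsub : H.edgeSet ⊆ ((E.image (fun p => s(p.1, p.2)) : Finset (Sym2 (Fin n))) : Set _) := by
      intro e
      induction e using Sym2.ind with
      | _ u v =>
        intro he
        rw [SimpleGraph.mem_edgeSet, hH] at he
        rw [Finset.mem_coe, Finset.mem_image]
        rcases he.2 with h | h
        · exact ⟨_, h, rfl⟩
        · exact ⟨_, h, Sym2.eq_swap⟩
    have h1 := Set.ncard_le_ncard hsub (Finset.finite_toSet _)
    rw [Set.ncard_coe_finset] at h1
    have h2 : (H.edgeSet.ncard : ℝ) ≤ E.card := by
      exact_mod_cast h1.trans Finset.card_image_le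
    have : (0 : ℝ) ≤ n := by positivity
    linarith
end

section
/- There exist absolute constants C > 0 and c > 0 such that the following holds. Let n ≥ 2, let r ≥ 1 and K ≥ 1 be integers, and let G be a connected n-vertex graph in which every ball of radius r contains at most K·r² vertices. Then G admits a +k additive emulator H with at most C·K·n·(log n)^c edges, where k = ⌈C·r·(log n)^c⌉. -/
open SimpleGraph

/-- The ball of radius `ρ` around `v` in `G`. -/
def gball {V : Type*} (G : SimpleGraph V) (v : V) (ρ : ℕ) : Set V :=
  {u | G.dist v u ≤ ρ}

lemma qe_count {n : ℕ} (m : ℕ) (F : Finset (Fin n)) (T : Finset (Fin m)) :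
    (Finset.univ.filter (fun f : Fin n → Fin m => ∀ x ∈ F, f x ∈ T)).card * m ^ F.card
      = T.card ^ F.card * m ^ n := by
  classical
  have h : (Finset.univ.filter (fun f : Fin n → Fin m => ∀ x ∈ F, f x ∈ T))
      = Fintype.piFinset (fun x => if x ∈ F then T else Finset.univ) := by
    ext f
    simp only [Finset.mem_filter, Finset.mem_univ, true_and, Fintype.mem_piFinset]
    refine forall_congr' fun x => ?_
    by_cases hx : x ∈ F <;> simp [hx]
  rw [h, Fintype.card_piFinset]
  have h2 : ∀ x : Fin n, (if x ∈ F then T else Finset.univ).card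
      = if x ∈ F then T.card else m := by
    intro x; split_ifs <;> simp
  simp only [h2]
  rw [Finset.prod_ite]
  simp only [Finset.prod_const, Finset.filter_mem_eq_inter, Finset.univ_inter]
  have h3 : (Finset.univ.filter (fun x => x ∉ F)).card + F.card = n := by
    have := Finset.card_filter_add_card_filter_not (s := (Finset.univ : Finset (Fin n))) (fun x => x ∈ F)
    simp only [Finset.filter_mem_eq_inter, Finset.univ_inter, Finset.card_univ, Fintype.card_fin] at this
    omega
  rw [mul_assoc, ← pow_add, h3]

lemma qe_hit {n k r B : ℕ} (E : Finset (Fin n × Fin n)) (hE : ∀ e ∈ E, e.1 ≠ e.2)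
    (hB : E.card ≤ B) (Q : Finset (Fin n × Fin n)) (F : Fin n × Fin n → Finset (Fin n))
    (hF : ∀ q ∈ Q, (F q).card = r)
    (hm : 2 * n ^ 2 * k ^ r ≤ (k + 1) ^ r) :
    ∃ S : Finset (Fin n), (∀ q ∈ Q, ∃ x ∈ F q, x ∈ S) ∧
      (k + 1) ^ 2 * (E.filter (fun e => e.1 ∈ S ∧ e.2 ∈ S)).card ≤ 2 * B := by
  classical
  let X := Finset.univ (α := Fin n → Fin (k+1))
  let bad : Fin n × Fin n → Finset (Fin n → Fin (k+1)) :=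
    fun q => X.filter (fun f => ∀ x ∈ F q, f x ∈ (Finset.univ.erase 0 : Finset (Fin (k+1))))
  let good := X.filter (fun f => ∀ q ∈ Q, ∃ x ∈ F q, f x = 0)
  have hXcard : X.card = (k+1)^n := by simp [X]
  have hbad : ∀ q ∈ Q, (bad q).card * (k+1)^r = k^r * (k+1)^n := by
    intro q hq
    have := qe_count (k+1) (F q) (Finset.univ.erase 0)
    rw [hF q hq] at this
    simpa [bad, X] using this
  have hQ : Q.card ≤ n^2 := by
    have := Finset.card_le_univ Q
    simpa [sq] using this
  have hcover : X ⊆ good ∪ Q.biUnion bad := by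
    intro f _
    by_cases h : ∀ q ∈ Q, ∃ x ∈ F q, f x = 0
    · exact Finset.mem_union_left _ (by simpa [good, X] using h)
    · apply Finset.mem_union_right
      push Not at h
      obtain ⟨q, hq, h⟩ := h
      exact Finset.mem_biUnion.2 ⟨q, hq, by simpa [bad, X] using h⟩
  have hc : (k+1)^n ≤ good.card + ∑ q ∈ Q, (bad q).card := by
    rw [← hXcard]
    exact (Finset.card_le_card hcover).trans ((Finset.card_union_le _ _).trans
      (Nat.add_le_add_left Finset.card_biUnion_le _))
  have hpos : 0 < (k+1)^r := by positivity
  have hsum : 2 * ∑ q ∈ Q, (bad q).card ≤ (k+1)^n := by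
    have h1 : (∑ q ∈ Q, (bad q).card) * (k+1)^r = Q.card * (k^r * (k+1)^n) := by
      rw [Finset.sum_mul, Finset.sum_congr rfl hbad]; simp
    have h2 : (2 * ∑ q ∈ Q, (bad q).card) * (k+1)^r ≤ (k+1)^n * (k+1)^r := by
      calc (2 * ∑ q ∈ Q, (bad q).card) * (k+1)^r
          = 2 * (Q.card * (k^r * (k+1)^n)) := by rw [mul_assoc, h1]
        _ ≤ 2 * (n^2 * (k^r * (k+1)^n)) := by gcongr
        _ = (k+1)^n * (2 * n^2 * k^r) := by ring
        _ ≤ _ := by gcongr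
    exact Nat.le_of_mul_le_mul_right h2 hpos
  have hg : (k+1)^n ≤ 2 * good.card := by omega
  have hgne : good.Nonempty := by
    rw [← Finset.card_pos]
    have : 0 < (k+1)^n := by positivity
    omega
  let S : (Fin n → Fin (k+1)) → Finset (Fin n) := fun f => Finset.univ.filter (fun x => f x = 0)
  have hpairs : ∑ f ∈ good, (k + 1) ^ 2 * (E.filter (fun e => e.1 ∈ S f ∧ e.2 ∈ S f)).card
      ≤ ∑ f ∈ good, 2 * B := by
    calc ∑ f ∈ good, (k + 1) ^ 2 * (E.filter (fun e => e.1 ∈ S f ∧ e.2 ∈ S f)).card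
        ≤ ∑ f ∈ X, (k + 1) ^ 2 * (E.filter (fun e => e.1 ∈ S f ∧ e.2 ∈ S f)).card :=
          Finset.sum_le_sum_of_subset (Finset.filter_subset _ _)
      _ = (k+1)^2 * ∑ f ∈ X, ∑ e ∈ E, if e.1 ∈ S f ∧ e.2 ∈ S f then 1 else 0 := by
          rw [← Finset.mul_sum]; simp only [Finset.card_filter]
      _ = ∑ e ∈ E, (X.filter (fun f => e.1 ∈ S f ∧ e.2 ∈ S f)).card * (k+1)^2 := by
          rw [Finset.sum_comm, Finset.mul_sum]
          refine Finset.sum_congr rfl fun e _ => ?_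
          rw [Finset.card_filter, mul_comm]
      _ = ∑ e ∈ E, (k+1)^n := by
          refine Finset.sum_congr rfl fun e he => ?_
          have := qe_count (k+1) {e.1, e.2} {0}
          rw [Finset.card_pair (hE e he)] at this
          simpa [X, S] using this
      _ = E.card * (k+1)^n := by simp
      _ ≤ B * (2 * good.card) := by gcongr
      _ = ∑ f ∈ good, 2 * B := by simp; ring
  obtain ⟨f, hf, hle⟩ := Finset.exists_le_of_sum_le hgne hpairs
  refine ⟨S f, ?_, hle⟩
  intro q hq
  obtain ⟨x, hx, h0⟩ := (Finset.mem_filter.1 hf).2 q hq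
  exact ⟨x, hx, by simpa [S] using h0⟩

lemma qe_mid {V : Type*} {G : SimpleGraph V} (hG : G.Connected) (s t : V) (i : ℕ)
    (hi : i ≤ G.dist s t) : ∃ x, G.dist s x = i ∧ i + G.dist x t = G.dist s t := by
  obtain ⟨p, hp⟩ := hG.exists_walk_length_eq_dist s t
  refine ⟨p.getVert i, ?_⟩
  have h1 := SimpleGraph.dist_le (p.take i)
  have h2 := SimpleGraph.dist_le (p.drop i)
  have h3 := hG.dist_triangle (u := s) (v := p.getVert i) (w := t)
  rw [SimpleGraph.Walk.take_length] at h1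
  rw [SimpleGraph.Walk.drop_length] at h2
  omega

noncomputable def qeW {V : Type*} (G : SimpleGraph V) : Sym2 V → ℕ :=
  Sym2.lift ⟨fun a b => G.dist a b, fun _ _ => SimpleGraph.dist_comm⟩

lemma qe_lower {V : Type*} {G H : SimpleGraph V} (hG : G.Connected) {s t : V} (p : H.Walk s t) :
    G.dist s t ≤ (p.edges.map (qeW G)).sum := by
  induction p with
  | nil => simp
  | @cons u v w h p ih =>
    have := hG.dist_triangle (u := u) (v := v) (w := w)
    simp only [SimpleGraph.Walk.edges_cons, List.map_cons, List.sum_cons]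
    have h2 : qeW G s(u, v) = G.dist u v := rfl
    omega

def qeR {V : Type*} (G H : SimpleGraph V) (s t : V) (d : ℕ) : Prop :=
  ∃ p : H.Walk s t, (p.edges.map (qeW G)).sum ≤ d

lemma qeR_trans {V : Type*} {G H : SimpleGraph V} {s t u : V} {a b : ℕ}
    (h1 : qeR G H s t a) (h2 : qeR G H t u b) : qeR G H s u (a + b) := by
  obtain ⟨p, hp⟩ := h1
  obtain ⟨q, hq⟩ := h2
  exact ⟨p.append q, by simp [SimpleGraph.Walk.edges_append]; omega⟩

lemma qeR_symm {V : Type*} {G H : SimpleGraph V} {s t : V} {a : ℕ}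
    (h1 : qeR G H s t a) : qeR G H t s a := by
  obtain ⟨p, hp⟩ := h1
  exact ⟨p.reverse, by simpa [SimpleGraph.Walk.edges_reverse, List.sum_reverse] using hp⟩

lemma qeR_edge {V : Type*} {G H : SimpleGraph V} {s t : V}
    (h : s ≠ t → H.Adj s t) : qeR G H s t (G.dist s t) := by
  by_cases hst : s = t
  · subst hst; exact ⟨.nil, by simp⟩
  · exact ⟨(h hst).toWalk, by simp [qeW]⟩

lemma qeR_mono {V : Type*} {G H : SimpleGraph V} {s t : V} {a b : ℕ}
    (h1 : qeR G H s t a) (hab : a ≤ b) : qeR G H s t b := by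
  obtain ⟨p, hp⟩ := h1
  exact ⟨p, hp.trans hab⟩

lemma qe_emu {V : Type*} {G H : SimpleGraph V} (hG : G.Connected) {k : ℕ}
    (h : ∀ s t, qeR G H s t (G.dist s t + k)) : IsAdditiveEmulator G H (qeW G) k := by
  refine ⟨?_, fun s t => ⟨?_, ?_⟩⟩
  · intro e
    induction e using Sym2.ind with
    | _ a b =>
      intro he
      exact hG.pos_dist_of_ne (SimpleGraph.Adj.ne he)
  · refine le_iInf fun p => ?_
    exact_mod_cast qe_lower hG p
  · obtain ⟨p, hp⟩ := h s t
    refine (iInf_le _ p).trans ?_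
    exact_mod_cast hp

lemma qe_edges {n : ℕ} (P : Finset (Fin n × Fin n)) :
    (SimpleGraph.fromRel (fun a b => (a, b) ∈ P)).edgeSet.ncard ≤ P.card := by
  classical
  have : (SimpleGraph.fromRel (fun a b => (a, b) ∈ P)).edgeSet
      ⊆ ((P.image (fun e => s(e.1, e.2)) : Finset (Sym2 (Fin n))) : Set (Sym2 (Fin n))) := by
    intro e
    induction e using Sym2.ind with
    | _ a b =>
      intro he
      simp only [SimpleGraph.mem_edgeSet, SimpleGraph.fromRel_adj] at he
      simp only [Finset.coe_image, Set.mem_image, Finset.mem_coe]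
      rcases he.2 with h | h
      · exact ⟨_, h, rfl⟩
      · exact ⟨_, h, Sym2.eq_swap⟩
  refine (Set.ncard_le_ncard this (Finset.finite_toSet _)).trans ?_
  rw [Set.ncard_coe_finset]
  exact Finset.card_image_le

lemma qe_main {n k r K : ℕ} (hr : 1 ≤ r) (G : SimpleGraph (Fin n)) (hG : G.Connected)
    (hb : ∀ v : Fin n, (gball G v r).ncard ≤ K * r ^ 2)
    (hm : 2 * n ^ 2 * k ^ r ≤ (k + 1) ^ r) :
    ∃ (H : SimpleGraph (Fin n)) (M : ℕ), (∀ s t, qeR G H s t (G.dist s t + 4 * r)) ∧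
      H.edgeSet.ncard ≤ n + M ∧ (k + 1) ^ 2 * M ≤ 2 * (n * (K * r ^ 2)) := by
  classical
  by_cases hc : ∃ v, ∀ t, G.dist v t ≤ r
  · obtain ⟨v, hv⟩ := hc
    let P : Finset (Fin n × Fin n) := Finset.univ.image (fun t => (v, t))
    refine ⟨SimpleGraph.fromRel (fun a b => (a, b) ∈ P), 0, ?_, ?_, by simp⟩
    · intro s t
      have key : ∀ t, qeR G (SimpleGraph.fromRel (fun a b => (a, b) ∈ P)) v t (G.dist v t) :=
        fun t => qeR_edge fun hne => by simp [SimpleGraph.fromRel_adj, P, hne]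
      have h1 := hv s
      have h2 := hv t
      exact qeR_mono (qeR_trans (qeR_symm (key s)) (key t)) (by omega)
    · refine (qe_edges P).trans (Finset.card_image_le.trans (by simp))
  push Not at hc
  let E : Finset (Fin n × Fin n) := Finset.univ.filter (fun e => e.1 ≠ e.2 ∧ G.dist e.1 e.2 ≤ r)
  have hE : E.card ≤ n * (K * r ^ 2) := by
    have h1 : E ⊆ Finset.univ.biUnion (fun v : Fin n =>
        (Finset.univ.filter (fun u => G.dist v u ≤ r)).image (fun u => (v, u))) := by
      rintro ⟨a, b⟩ h
      simp [E] at h ⊢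
      exact h.2
    refine (Finset.card_le_card h1).trans (Finset.card_biUnion_le.trans ?_)
    calc _ ≤ ∑ v : Fin n, K * r^2 := by
          refine Finset.sum_le_sum fun v _ => Finset.card_image_le.trans ?_
          refine le_trans (le_of_eq ?_) (hb v)
          rw [← Set.ncard_coe_finset]
          congr 1
          ext u; simp [gball]
      _ = _ := by simp
  let Q : Finset (Fin n × Fin n) := Finset.univ.filter (fun q => r < G.dist q.1 q.2)
  have hmid : ∀ (q : Fin n × Fin n) (i : ℕ), ∃ x, q ∈ Q → i < r →
      G.dist q.1 x = i + 1 ∧ i + 1 + G.dist x q.2 = G.dist q.1 q.2 := by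
    intro q i
    by_cases h : q ∈ Q ∧ i < r
    · have h1 : r < G.dist q.1 q.2 := by simpa [Q] using h.1
      obtain ⟨x, hx⟩ := qe_mid hG q.1 q.2 (i+1) (by omega)
      exact ⟨x, fun _ _ => hx⟩
    · exact ⟨q.1, fun a b => absurd ⟨a, b⟩ h⟩
  choose φ hφ using hmid
  let F : Fin n × Fin n → Finset (Fin n) := fun q => (Finset.range r).image (φ q)
  have hF : ∀ q ∈ Q, (F q).card = r := by
    intro q hq
    rw [Finset.card_image_of_injOn, Finset.card_range]
    intro i hi j hj hij
    have h1 := (hφ q i hq (by simpa using hi)).1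
    have h2 := (hφ q j hq (by simpa using hj)).1
    rw [hij] at h1
    omega
  obtain ⟨S, hS, hSE⟩ := qe_hit E (by intro e he; simp [E] at he; exact he.1) hE Q F hF hm
  have hit : ∀ s t, r < G.dist s t → ∃ x ∈ S, G.dist s x ≤ r ∧ 1 ≤ G.dist s x ∧
      G.dist s x + G.dist x t = G.dist s t := by
    intro s t hst
    have hq : (s, t) ∈ Q := by simpa [Q] using hst
    obtain ⟨x, hx, hxS⟩ := hS _ hq
    obtain ⟨i, hi, rfl⟩ := Finset.mem_image.1 hx
    have hi' := Finset.mem_range.1 hi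
    have := hφ _ i hq hi'
    refine ⟨_, hxS, ?_⟩
    simp only at this
    omega
  have hnear : ∀ v, ∃ x ∈ S, G.dist v x ≤ r := by
    intro v
    obtain ⟨t, ht⟩ := hc v
    obtain ⟨x, hx, h, _⟩ := hit v t ht
    exact ⟨x, hx, h⟩
  choose π hπS hπ using hnear
  let P : Finset (Fin n × Fin n) := Finset.univ.image (fun v => (v, π v)) ∪
    E.filter (fun e => e.1 ∈ S ∧ e.2 ∈ S)
  let H := SimpleGraph.fromRel (fun a b => (a, b) ∈ P)
  have hS2 : ∀ d, ∀ s ∈ S, ∀ t ∈ S, G.dist s t = d → qeR G H s t d := by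
    intro d
    induction d using Nat.strong_induction_on with
    | _ d ih =>
      intro s hs t ht hd
      by_cases hdr : d ≤ r
      · rw [← hd]
        refine qeR_edge fun hne => ?_
        simp only [H, SimpleGraph.fromRel_adj]
        refine ⟨hne, Or.inl (Finset.mem_union_right _ ?_)⟩
        simp [E, hne, hs, ht]; omega
      · obtain ⟨x, hx, h1, h2, h3⟩ := hit s t (by omega)
        have e1 := ih (G.dist s x) (by omega) s hs x hx rfl
        have e2 := ih (G.dist x t) (by omega) x hx t ht rfl
        exact qeR_mono (qeR_trans e1 e2) (by omega)
  refine ⟨H, (E.filter (fun e => e.1 ∈ S ∧ e.2 ∈ S)).card, ?_, ?_, hSE⟩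
  · intro s t
    have key : ∀ v, qeR G H v (π v) (G.dist v (π v)) := fun v => qeR_edge fun hne => by
      simp only [H, SimpleGraph.fromRel_adj]
      exact ⟨hne, Or.inl (Finset.mem_union_left _ (by simp))⟩
    have h1 := hS2 _ (π s) (hπS s) (π t) (hπS t) rfl
    have h2 := qeR_trans (qeR_trans (key s) h1) (qeR_symm (key t))
    refine qeR_mono h2 ?_
    have a1 := hπ s
    have a2 := hπ t
    have a3 := hG.dist_triangle (u := π s) (v := s) (w := π t)
    have a4 := hG.dist_triangle (u := s) (v := t) (w := π t)
    have a5 : G.dist (π s) s = G.dist s (π s) := SimpleGraph.dist_comm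
    omega
  · refine (qe_edges P).trans ((Finset.card_union_le _ _).trans ?_)
    gcongr
    exact Finset.card_image_le.trans (by simp)

lemma qe_param {n r : ℕ} (hn : 2 ≤ n) (hr : 1 ≤ r) :
    ∃ k : ℕ, 2 * n ^ 2 * k ^ r ≤ (k + 1) ^ r ∧ (r : ℝ) ≤ 6 * Real.log n * (k + 1) := by
  have hn' : (2:ℝ) ≤ n := by exact_mod_cast hn
  have hlog2 : Real.log 2 ≤ Real.log n := Real.log_le_log (by norm_num) hn'
  have hl2 := Real.log_two_gt_d9
  have hL : 0 < Real.log n := by linarith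
  by_cases h : (r : ℝ) < 3 * Real.log n
  · refine ⟨0, ?_, by push_cast; linarith⟩
    rw [zero_pow (by omega)]; simp
  push Not at h
  set x : ℝ := r / (3 * Real.log n) with hx
  have hx1 : 1 ≤ x := by rw [hx, le_div_iff₀ (by positivity)]; linarith
  have hrx : (r:ℝ) = x * (3 * Real.log n) := by rw [hx]; field_simp
  obtain ⟨k, hk⟩ : ∃ k, ⌊x⌋₊ = k + 1 := by
    have : 1 ≤ ⌊x⌋₊ := Nat.le_floor (by simpa using hx1)
    exact ⟨⌊x⌋₊ - 1, by omega⟩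
  have hk1 : ((k:ℝ) + 1) ≤ x := by
    have := Nat.floor_le (show 0 ≤ x by linarith)
    rw [hk] at this; exact_mod_cast this
  have hk2 : x < (k:ℝ) + 1 + 1 := by
    have := Nat.lt_floor_add_one x
    rw [hk] at this; exact_mod_cast this
  have hk0 : (0:ℝ) ≤ k := Nat.cast_nonneg k
  refine ⟨k, ?_, ?_⟩
  · have h1 : (k:ℝ) ≤ (k+1) * Real.exp (-(1/(k+1))) := by
      have := Real.add_one_le_exp (-(1/((k:ℝ)+1)))
      calc (k:ℝ) = (k+1) * (-(1/((k:ℝ)+1)) + 1) := by field_simp; ring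
        _ ≤ _ := by gcongr
    have h2 : (k:ℝ)^r ≤ (k+1)^r * Real.exp (-(3 * Real.log n)) := by
      calc (k:ℝ)^r ≤ ((k+1) * Real.exp (-(1/(k+1))))^r := by gcongr
        _ = (k+1)^r * Real.exp (r * (-(1/(k+1)))) := by rw [mul_pow, ← Real.exp_nat_mul]
        _ ≤ _ := by
          gcongr
          rw [mul_neg, neg_le_neg_iff, mul_one_div, le_div_iff₀ (by positivity), hrx]
          nlinarith
    have h3 : Real.exp (-(3 * Real.log n)) * (n:ℝ)^3 = 1 := by
      rw [Real.exp_neg, mul_comm 3, Real.exp_mul, Real.exp_log (by linarith)]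
      norm_cast
      field_simp
    have h4 : 2 * (n:ℝ)^2 * (k:ℝ)^r ≤ ((k:ℝ)+1)^r := by
      calc 2 * (n:ℝ)^2 * (k:ℝ)^r ≤ n * (n:ℝ)^2 * ((k+1)^r * Real.exp (-(3 * Real.log n))) := by gcongr
        _ = (k+1)^r * (Real.exp (-(3 * Real.log n)) * (n:ℝ)^3) := by ring
        _ = _ := by rw [h3, mul_one]
    exact_mod_cast h4
  · rw [hrx]; nlinarith

theorem quadratic_expansion_emulator :
    ∃ C c : ℝ, 0 < C ∧ 0 < c ∧
      ∀ n : ℕ, 2 ≤ n → ∀ r K : ℕ, 1 ≤ r → 1 ≤ K →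
        ∀ G : SimpleGraph (Fin n), G.Connected →
          (∀ v : Fin n, (gball G v r).ncard ≤ K * r ^ 2) →
          ∃ (H : SimpleGraph (Fin n)) (w : Sym2 (Fin n) → ℕ),
            IsAdditiveEmulator G H w ⌈C * (r : ℝ) * Real.log n ^ c⌉₊ ∧
            ((H.edgeSet.ncard : ℝ) ≤ C * K * n * Real.log n ^ c) := by
  refine ⟨100, 2, by norm_num, by norm_num, ?_⟩
  intro n hn r K hr hK G hG hb
  obtain ⟨k, hm, hk⟩ := qe_param hn hr
  obtain ⟨H, M, hR, hcard, hM⟩ := qe_main hr G hG hb hm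
  have hn' : (2:ℝ) ≤ n := by exact_mod_cast hn
  have hK' : (1:ℝ) ≤ K := by exact_mod_cast hK
  have hlog2 : Real.log 2 ≤ Real.log n := Real.log_le_log (by norm_num) hn'
  have hl2 := Real.log_two_gt_d9
  have hL2 : (1:ℝ)/4 ≤ Real.log n ^ 2 := by nlinarith
  rw [Real.rpow_two]
  refine ⟨H, qeW G, qe_emu hG fun s t => qeR_mono (hR s t) ?_, ?_⟩
  · gcongr
    have : ((4 * r : ℕ) : ℝ) ≤ 100 * r * Real.log n ^ 2 := by
      push_cast
      have : (0:ℝ) ≤ r := Nat.cast_nonneg r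
      nlinarith
    exact_mod_cast this.trans (Nat.le_ceil _)
  · have h1 : (H.edgeSet.ncard : ℝ) ≤ n + M := by exact_mod_cast hcard
    have h2 : ((k:ℝ) + 1)^2 * M ≤ 2 * (n * (K * (r:ℝ)^2)) := by exact_mod_cast hM
    have h3 : (r:ℝ)^2 ≤ (6 * Real.log n * (k+1))^2 := by gcongr
    have h4 : (M:ℝ) ≤ 72 * (K * n * Real.log n ^ 2) := by
      have : ((k:ℝ)+1)^2 * M ≤ ((k:ℝ)+1)^2 * (72 * (K * n * Real.log n ^ 2)) := by
        calc ((k:ℝ)+1)^2 * M ≤ 2 * (n * (K * (r:ℝ)^2)) := h2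
          _ ≤ 2 * (n * (K * (6 * Real.log n * (k+1))^2)) := by gcongr
          _ = _ := by ring
      exact le_of_mul_le_mul_left this (by positivity)
    have h5 : (n:ℝ) ≤ 4 * (K * n * Real.log n ^ 2) := by
      have : (1:ℝ) * (1/4) ≤ K * Real.log n ^ 2 := by gcongr
      nlinarith
    have h6 : 0 ≤ (K:ℝ) * n * Real.log n ^ 2 := by positivity
    nlinarith
end
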